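/- Let c = (c_1, …, c_k) and d = (d_1, …, d_k) be lists of positive integers, and encode allowable paths by words w = (w_1, …, w_k) with each w_j ∈ {B, T, TB} subject to: w_j = B implies j = 1 or w_{j−1} ∈ {B, TB}. The integer of a word w is the product over j of m_j, where m_j = c_j if w_j = B, m_j = d_j if w_j = T, and m_j = d_j·c_j if w_j = TB; the word ends at the bottom iff w_k ∈ {B, TB}. Let E be the set of integers of words ending at the bottom and F the set of integers of words ending at the top. Then gcd(E ∪ F) divides gcd(E), and Y_{c,d} = gcd(E) / gcd(E ∪ F); equivalently gcd(E) = Y_{c,d} · gcd(E ∪ F). -/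

import Mathlib

/-- The three kinds of steps of an allowable path through the 2×k array: `B` (a
right-one move along the bottom row, visiting `c_j`), `T` (a right-one or up-right
move ending in the top row, visiting `d_j`), and `TB` (an up-right move to `d_j`
followed by a down move to `c_j`, visiting `d_j·c_j`). -/
inductive Step : Type
  | B : Step
  | T : Step
  | TB : Step
deriving DecidableEq

/-- The factor contributed in column `j` by a step, where the bottom entry is `cj` and
the top entry is `dj`. -/
def stepVal (cj dj : ℕ) : Step → ℕ
  | Step.B => cj
  | Step.T => dj
  | Step.TB => dj * cj

/-- The integer of a word: the product of the entries visited by the corresponding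
path. -/
def wordVal (c d : List ℕ) (w : List Step) : ℕ :=
  (List.zipWith (fun (p : ℕ × ℕ) s => stepVal p.1 p.2 s) (List.zip c d) w).prod

/-- A word is valid when `w_j = B` implies `j = 1` or `w_{j−1} ∈ {B, TB}` (a path can
only continue along the bottom row if it is already in the bottom row). -/
def ValidWord (w : List Step) : Prop :=
  ∀ j : ℕ, (h : j < w.length) → w.get ⟨j, h⟩ = Step.B →
    j = 0 ∨ ∃ h' : j - 1 < w.length,
      (w.get ⟨j - 1, h'⟩ = Step.B ∨ w.get ⟨j - 1, h'⟩ = Step.TB)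

/-- The word ends at the bottom row iff its last letter is `B` or `TB`. -/
def EndsBottom (w : List Step) : Prop :=
  w.getLast? = some Step.B ∨ w.getLast? = some Step.TB

/-- The word ends at the top row iff its last letter is `T`. -/
def EndsTop (w : List Step) : Prop :=
  w.getLast? = some Step.T

/-- The recursively defined quantities `Y_j`: `Y₀ = 1` and
`Y_j = gcd((c_j·Y_{j−1}) / gcd(c_j·Y_{j−1}, d_j), c_j)`. -/
def Yaux (c d : List ℕ) : ℕ → ℕ
  | 0 => 1
  | j + 1 =>
      Nat.gcd ((c.getD j 1 * Yaux c d j) / Nat.gcd (c.getD j 1 * Yaux c d j) (d.getD j 1))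
        (c.getD j 1)

/-- `Y_{c,d} := Y_k` where `k` is the common length of `c` and `d`. -/
def Ycd (c d : List ℕ) : ℕ := Yaux c d c.length

def IsGcdOf (P : ℕ → Prop) (g : ℕ) : Prop := ∀ a, a ∣ g ↔ ∀ m, P m → a ∣ m

theorem dvd_mul_iff_div_gcd (a c m : ℕ) (hc : 0 < c) : a ∣ m * c ↔ a / Nat.gcd a c ∣ m := by
  have hg : 0 < Nat.gcd a c := Nat.gcd_pos_of_pos_right _ hc
  constructor
  · intro h
    have hcop := Nat.coprime_div_gcd_div_gcd hg
    apply hcop.dvd_of_dvd_mul_right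
    apply Nat.dvd_of_mul_dvd_mul_right hg
    rw [Nat.div_mul_cancel (Nat.gcd_dvd_left a c), mul_assoc,
      Nat.div_mul_cancel (Nat.gcd_dvd_right a c)]
    exact h
  · intro h
    have := Nat.mul_dvd_mul h (Nat.gcd_dvd_right a c)
    rwa [Nat.div_mul_cancel (Nat.gcd_dvd_left a c)] at this

theorem IsGcdOf.mul {P : ℕ → Prop} {g : ℕ} (h : IsGcdOf P g) (c : ℕ) (hc : 0 < c) (a : ℕ) :
    a ∣ g * c ↔ ∀ m, P m → a ∣ m * c := by
  rw [dvd_mul_iff_div_gcd a c g hc, h]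
  exact forall_congr' fun m => by rw [dvd_mul_iff_div_gcd a c m hc]

theorem Y_step (c d Y : ℕ) (hd : 0 < d) :
    Nat.gcd ((c * Y) / Nat.gcd (c * Y) d) c * Nat.gcd (c * Y) d = c * Nat.gcd Y d := by
  rw [← Nat.gcd_mul_right, Nat.div_mul_cancel (Nat.gcd_dvd_left _ _), Nat.gcd_mul_left,
    ← Nat.gcd_assoc, Nat.gcd_eq_left (Nat.dvd_mul_left Y c)]

theorem wordVal_snoc (c d : List ℕ) (w : List Step) (s : Step) (hc : w.length < c.length)
    (hd : w.length < d.length) :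
    wordVal c d (w ++ [s]) =
      wordVal c d w * stepVal (c.getD w.length 1) (d.getD w.length 1) s := by
  unfold wordVal
  induction w generalizing c d with
  | nil =>
    cases c <;> cases d <;> simp_all
  | cons x w ih =>
    cases c with
    | nil => simp at hc
    | cons c0 c =>
      cases d with
      | nil => simp at hd
      | cons d0 d =>
        simp only [List.length_cons, Nat.add_lt_add_iff_right] at hc hd
        simp only [List.cons_append, List.zip_cons_cons, List.zipWith_cons_cons, List.prod_cons,
          List.length_cons, List.getD_cons_succ]
        rw [ih c d hc hd, mul_assoc]

theorem endsBottom_iff (w : List Step) (hw : w ≠ []) :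
    EndsBottom w ↔ (w[w.length - 1]? = some Step.B ∨ w[w.length - 1]? = some Step.TB) := by
  unfold EndsBottom
  rw [List.getLast?_eq_getElem?]

theorem validWord_iff (w : List Step) : ValidWord w ↔
    ∀ j, w[j]? = some Step.B → j = 0 ∨ w[j-1]? = some Step.B ∨ w[j-1]? = some Step.TB := by
  unfold ValidWord
  simp only [List.getElem?_eq_some_iff, List.get_eq_getElem]
  constructor
  · rintro h j ⟨hj, hB⟩
    rcases h j hj hB with h | ⟨h', h | h⟩
    · exact Or.inl h
    · exact Or.inr (Or.inl ⟨h', h⟩)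
    · exact Or.inr (Or.inr ⟨h', h⟩)
  · intro h j hj hB
    rcases h j ⟨hj, hB⟩ with h | ⟨h', h⟩ | ⟨h', h⟩
    · exact Or.inl h
    · exact Or.inr ⟨h', Or.inl h⟩
    · exact Or.inr ⟨h', Or.inr h⟩

theorem validWord_snoc (w : List Step) (s : Step) :
    ValidWord (w ++ [s]) ↔ ValidWord w ∧ (s = Step.B → w = [] ∨ EndsBottom w) := by
  rw [validWord_iff, validWord_iff]
  constructor
  · intro h
    refine ⟨fun j hj => ?_, fun hs => ?_⟩
    · have hlt : j < w.length := (List.getElem?_eq_some_iff.1 hj).1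
      have := h j
      rwa [List.getElem?_append_left hlt, List.getElem?_append_left (by omega : j - 1 < w.length),
        imp_iff_right hj] at this
    · by_cases hw : w = []
      · exact Or.inl hw
      · right
        have hl : 0 < w.length := List.length_pos_iff.2 hw
        have := h w.length (by simp [hs])
        rw [List.getElem?_append_left (by omega : w.length - 1 < w.length)] at this
        rw [endsBottom_iff w hw]
        exact this.resolve_left (by omega)
  · rintro ⟨h, hs⟩ j hj
    have hlt : j < (w ++ [s]).length := (List.getElem?_eq_some_iff.1 hj).1
    simp only [List.length_append, List.length_singleton] at hlt
    by_cases hjw : j < w.length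
    · rw [List.getElem?_append_left hjw] at hj
      rw [List.getElem?_append_left (by omega : j - 1 < w.length)]
      exact h j hj
    · obtain rfl : j = w.length := by omega
      have hsB : s = Step.B := by simpa using hj
      by_cases hw : w = []
      · left; simp [hw]
      · right
        have hl : 0 < w.length := List.length_pos_iff.2 hw
        rw [List.getElem?_append_left (by omega : w.length - 1 < w.length), ← endsBottom_iff w hw]
        exact (hs hsB).resolve_left hw

/-- Values of valid words of length `n` ending in the bottom row (or empty). -/
def BotVal (c d : List ℕ) (n m : ℕ) : Prop :=
  ∃ w : List Step, w.length = n ∧ ValidWord w ∧ (w = [] ∨ EndsBottom w) ∧ wordVal c d w = m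

/-- Values of all valid words of length `n`. -/
def AllVal (c d : List ℕ) (n m : ℕ) : Prop :=
  ∃ w : List Step, w.length = n ∧ ValidWord w ∧ wordVal c d w = m

theorem botVal_succ (c d : List ℕ) (n : ℕ) (hc : n < c.length) (hd : n < d.length) (m : ℕ) :
    BotVal c d (n+1) m ↔ (∃ m', BotVal c d n m' ∧ m = m' * c.getD n 1) ∨
      ∃ m', AllVal c d n m' ∧ m = m' * (d.getD n 1 * c.getD n 1) := by
  constructor
  · rintro ⟨w, hl, hv, hb, rfl⟩
    have hw : w ≠ [] := by rintro rfl; simp at hl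
    obtain ⟨v, s, rfl⟩ := List.eq_nil_or_concat' w |>.resolve_left hw
    have hvl : v.length = n := by simpa using hl
    subst hvl
    rw [validWord_snoc] at hv
    rw [wordVal_snoc c d v s hc hd]
    have hb := hb.resolve_left hw
    cases s with
    | B => exact Or.inl ⟨_, ⟨v, rfl, hv.1, hv.2 rfl, rfl⟩, rfl⟩
    | T => simp [EndsBottom] at hb
    | TB => exact Or.inr ⟨_, ⟨v, rfl, hv.1, rfl⟩, rfl⟩
  · rintro (⟨m', ⟨v, rfl, hv, hb, rfl⟩, rfl⟩ | ⟨m', ⟨v, rfl, hv, rfl⟩, rfl⟩)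
    · exact ⟨v ++ [Step.B], by simp, (validWord_snoc _ _).2 ⟨hv, fun _ => hb⟩,
        Or.inr (by simp [EndsBottom]), wordVal_snoc c d v _ hc hd⟩
    · exact ⟨v ++ [Step.TB], by simp, (validWord_snoc _ _).2 ⟨hv, fun h => by cases h⟩,
        Or.inr (by simp [EndsBottom]), wordVal_snoc c d v _ hc hd⟩

theorem allVal_succ (c d : List ℕ) (n : ℕ) (hc : n < c.length) (hd : n < d.length) (m : ℕ) :
    AllVal c d (n+1) m ↔ BotVal c d (n+1) m ∨ ∃ m', AllVal c d n m' ∧ m = m' * d.getD n 1 := by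
  constructor
  · rintro ⟨w, hl, hv, rfl⟩
    have hw : w ≠ [] := by rintro rfl; simp at hl
    obtain ⟨v, s, rfl⟩ := List.eq_nil_or_concat' w |>.resolve_left hw
    have hvl : v.length = n := by simpa using hl
    cases s with
    | T =>
      subst hvl
      rw [validWord_snoc] at hv
      exact Or.inr ⟨_, ⟨v, rfl, hv.1, rfl⟩, wordVal_snoc c d v _ hc hd⟩
    | B => exact Or.inl ⟨_, hl, hv, Or.inr (by simp [EndsBottom]), rfl⟩
    | TB => exact Or.inl ⟨_, hl, hv, Or.inr (by simp [EndsBottom]), rfl⟩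
  · rintro (⟨w, hl, hv, -, hm⟩ | ⟨m', ⟨v, rfl, hv, rfl⟩, rfl⟩)
    · exact ⟨w, hl, hv, hm⟩
    · exact ⟨v ++ [Step.T], by simp, (validWord_snoc _ _).2 ⟨hv, fun h => by cases h⟩,
        wordVal_snoc c d v _ hc hd⟩

theorem main_induction (c d : List ℕ) (hlen : d.length = c.length)
    (hc : ∀ x ∈ c, 0 < x) (hd : ∀ x ∈ d, 0 < x) (n : ℕ) (hn : n ≤ c.length) :
    ∃ g, IsGcdOf (BotVal c d n) (Yaux c d n * g) ∧ IsGcdOf (AllVal c d n) g := by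
  induction n with
  | zero =>
    have hv : ValidWord [] := by intro j h; simp at h
    refine ⟨1, fun a => ?_, fun a => ?_⟩
    · simp only [Yaux, mul_one]
      constructor
      · intro h m _; exact h.trans (one_dvd m)
      · intro h; exact h 1 ⟨[], rfl, hv, Or.inl rfl, by simp [wordVal]⟩
    · constructor
      · intro h m _; exact h.trans (one_dvd m)
      · intro h; exact h 1 ⟨[], rfl, hv, by simp [wordVal]⟩
  | succ n ih =>
    obtain ⟨g, hB, hA⟩ := ih (by omega)
    have hnc : n < c.length := by omega
    have hnd : n < d.length := by omega
    have hb := botVal_succ c d n hnc hnd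
    have ha := allVal_succ c d n hnc hnd
    have hC : 0 < c.getD n 1 := by
      rw [List.getD_eq_getElem _ _ hnc]; exact hc _ (List.getElem_mem hnc)
    have hD : 0 < d.getD n 1 := by
      rw [List.getD_eq_getElem _ _ hnd]; exact hd _ (List.getElem_mem hnd)
    simp only [Yaux]
    generalize c.getD n 1 = C at *
    generalize d.getD n 1 = D at *
    generalize Yaux c d n = Y at *
    have hB1 : ∀ a, (∀ m, BotVal c d (n+1) m → a ∣ m) ↔ a ∣ Y * g * C ∧ a ∣ g * (D * C) := by
      intro a
      rw [hB.mul C hC, hA.mul (D * C) (Nat.mul_pos hD hC)]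
      constructor
      · intro h
        exact ⟨fun m hm => h _ ((hb _).2 (Or.inl ⟨m, hm, rfl⟩)),
          fun m hm => h _ ((hb _).2 (Or.inr ⟨m, hm, rfl⟩))⟩
      · rintro ⟨h1, h2⟩ m hm
        rcases (hb m).1 hm with ⟨m', h, rfl⟩ | ⟨m', h, rfl⟩
        · exact h1 _ h
        · exact h2 _ h
    have hA1 : ∀ a, (∀ m, AllVal c d (n+1) m → a ∣ m) ↔ a ∣ Y * g * C ∧ a ∣ g * D := by
      intro a
      have : (∀ m, AllVal c d (n+1) m → a ∣ m) ↔
          (∀ m, BotVal c d (n+1) m → a ∣ m) ∧ a ∣ g * D := by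
        rw [hA.mul D hD]
        constructor
        · intro h
          exact ⟨fun m hm => h _ ((ha _).2 (Or.inl hm)),
            fun m hm => h _ ((ha _).2 (Or.inr ⟨m, hm, rfl⟩))⟩
        · rintro ⟨h1, h2⟩ m hm
          rcases (ha m).1 hm with h | ⟨m', h, rfl⟩
          · exact h1 _ h
          · exact h2 _ h
      rw [this, hB1]
      constructor
      · rintro ⟨⟨h1, -⟩, h2⟩; exact ⟨h1, h2⟩
      · rintro ⟨h1, h2⟩
        exact ⟨⟨h1, by rw [← mul_assoc]; exact h2.mul_right C⟩, h2⟩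
    refine ⟨Nat.gcd (C * Y) D * g, fun a => ?_, fun a => ?_⟩
    · rw [hB1, ← mul_assoc, Y_step C D Y hD, ← Nat.dvd_gcd_iff]
      have : Nat.gcd (Y * g * C) (g * (D * C)) = C * Nat.gcd Y D * g := by
        rw [show Y * g * C = (C * g) * Y by ring, show g * (D * C) = (C * g) * D by ring,
          Nat.gcd_mul_left]
        ring
      rw [this]
    · rw [hA1, ← Nat.dvd_gcd_iff]
      have : Nat.gcd (Y * g * C) (g * D) = Nat.gcd (C * Y) D * g := by
        rw [show Y * g * C = g * (C * Y) by ring, Nat.gcd_mul_left, mul_comm]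
      rw [this]

/-- Let `E` be the set of integers of valid length-`k` words ending at the bottom and
`F` the set of integers of valid length-`k` words ending at the top.  Then
`gcd(E ∪ F)` divides `gcd(E)`, and `gcd(E) = Y_{c,d} · gcd(E ∪ F)`. -/
theorem gcd_paths_eq_Ycd (k : ℕ) (c d : List ℕ) (hck : c.length = k) (hdk : d.length = k)
    (hc : ∀ x ∈ c, 0 < x) (hd : ∀ x ∈ d, 0 < x)
    (E F : Finset ℕ)
    (hE : ∀ m, m ∈ E ↔ ∃ w : List Step,
      w.length = k ∧ ValidWord w ∧ EndsBottom w ∧ wordVal c d w = m)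
    (hF : ∀ m, m ∈ F ↔ ∃ w : List Step,
      w.length = k ∧ ValidWord w ∧ EndsTop w ∧ wordVal c d w = m) :
    Finset.gcd (E ∪ F) id ∣ Finset.gcd E id ∧
      Finset.gcd E id = Ycd c d * Finset.gcd (E ∪ F) id := by
  refine ⟨Finset.gcd_mono Finset.subset_union_left, ?_⟩
  subst hck
  rcases Nat.eq_zero_or_pos c.length with h0 | hpos
  · have hE0 : E = ∅ := by
      refine Finset.eq_empty_of_forall_notMem fun m hm => ?_
      obtain ⟨w, hl, -, hb, -⟩ := (hE m).1 hm
      rw [h0, List.length_eq_zero_iff] at hl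
      subst hl
      simp [EndsBottom] at hb
    have hF0 : F = ∅ := by
      refine Finset.eq_empty_of_forall_notMem fun m hm => ?_
      obtain ⟨w, hl, -, hb, -⟩ := (hF m).1 hm
      rw [h0, List.length_eq_zero_iff] at hl
      subst hl
      simp [EndsTop] at hb
    simp [hE0, hF0]
  · obtain ⟨g, hB, hA⟩ := main_induction c d hdk hc hd c.length le_rfl
    have hEm : ∀ m, m ∈ E ↔ BotVal c d c.length m := by
      intro m
      rw [hE]
      refine exists_congr fun w => and_congr_right fun hl => and_congr_right fun _ =>
        and_congr_left fun _ => ?_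
      have hw : w ≠ [] := by rintro rfl; simp at hl; omega
      simp [hw]
    have hEF : ∀ m, m ∈ E ∪ F ↔ AllVal c d c.length m := by
      intro m
      rw [Finset.mem_union, hE, hF]
      constructor
      · rintro (⟨w, hl, hv, -, hm⟩ | ⟨w, hl, hv, -, hm⟩) <;> exact ⟨w, hl, hv, hm⟩
      · rintro ⟨w, hl, hv, hm⟩
        have hw : w ≠ [] := by rintro rfl; simp at hl; omega
        obtain ⟨v, s, rfl⟩ := List.eq_nil_or_concat' w |>.resolve_left hw
        cases s with
        | T => exact Or.inr ⟨_, hl, hv, by simp [EndsTop], hm⟩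
        | B => exact Or.inl ⟨_, hl, hv, by simp [EndsBottom], hm⟩
        | TB => exact Or.inl ⟨_, hl, hv, by simp [EndsBottom], hm⟩
    have key : ∀ (S : Finset ℕ) (P : ℕ → Prop) (x : ℕ), (∀ m, m ∈ S ↔ P m) → IsGcdOf P x →
        Finset.gcd S id = x := by
      intro S P x hS hx
      apply Nat.dvd_antisymm
      · rw [hx]
        intro m hm
        exact Finset.gcd_dvd (f := id) ((hS m).2 hm)
      · refine Finset.dvd_gcd fun m hm => ?_
        exact (hx x).1 dvd_rfl m ((hS m).1 hm)
    rw [key E _ _ hEm hB, key (E ∪ F) _ _ hEF hA, Ycd]
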